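/- Let H be a real Hilbert space, T > 0, and let u, w : ℝ → H be continuously differentiable on [0,T] with derivatives u', w'. Let φ : ℝ → ℝ be continuously differentiable on [0,T] with φ(0) = 0, φ(T) = 1 and |φ(τ)| ≤ 1 for all τ ∈ [0,T]. Then for every t ∈ [0,T]: ⟪u(t), w(t)⟫ ≤ (sup_{τ∈[0,T]} |φ'(τ)|)·(∫₀ᵀ ‖u(τ)‖² dτ)^{1/2}·(∫₀ᵀ ‖w(τ)‖² dτ)^{1/2} + 2·∫₀ᵀ ‖u'(τ)‖·‖w(τ)‖ dτ + 2·∫₀ᵀ ‖u(τ)‖·‖w'(τ)‖ dτ. -/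

import Mathlib

open scoped RealInnerProductSpace

/-!
Integrating the derivative of `φ • g`, with `φ` a cutoff from `φ a = 0` to `φ b = 1`, over `[a, b]`
recovers `g b`; subtracting the integral of `g'` over `[t, b]` then gives `g t`, so that no boundary
value of `g` remains. As `|φ| ≤ 1`, both integrals contribute at most `∫ ‖g'‖`, which is where the
factor `2` comes from, and the remaining term `∫ |φ'| ‖g‖` is handled by Cauchy–Schwarz when
`g = ⟪u, w⟫`.
-/

open MeasureTheory Set

section Integral

theorem integral_norm_mul_norm_le_sqrt_mul_sqrt {α E : Type*} {_ : MeasurableSpace α}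
    [NormedAddCommGroup E] {μ : Measure α} {f g : α → E} (hf : MemLp f 2 μ) (hg : MemLp g 2 μ) :
    ∫ x, ‖f x‖ * ‖g x‖ ∂μ ≤ √(∫ x, ‖f x‖ ^ 2 ∂μ) * √(∫ x, ‖g x‖ ^ 2 ∂μ) := by
  simpa [Real.sqrt_eq_rpow] using
    integral_mul_norm_le_Lp_mul_Lq (p := 2) (q := 2) .two_two
      (by simpa using hf) (by simpa using hg)

variable {μ : Measure ℝ} {a b : ℝ}

theorem intervalIntegral_norm_mul_norm_le_sqrt_mul_sqrt {E : Type*} [NormedAddCommGroup E]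
    [IsLocallyFiniteMeasure μ] {f g : ℝ → E} (hab : a ≤ b)
    (hf : ContinuousOn f (Icc a b)) (hg : ContinuousOn g (Icc a b)) :
    ∫ x in a..b, ‖f x‖ * ‖g x‖ ∂μ ≤
      √(∫ x in a..b, ‖f x‖ ^ 2 ∂μ) * √(∫ x in a..b, ‖g x‖ ^ 2 ∂μ) := by
  have memLp_two {h : ℝ → E} (hh : ContinuousOn h (Icc a b)) :
      MemLp h 2 (μ.restrict (Ioc a b)) :=
    (memLp_two_iff_integrable_sq_norm
      ((hh.mono Ioc_subset_Icc_self).aestronglyMeasurable measurableSet_Ioc)).2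
      ((hh.norm.pow 2).intervalIntegrable_of_Icc hab).1
  simp only [intervalIntegral.integral_of_le hab]
  exact integral_norm_mul_norm_le_sqrt_mul_sqrt (memLp_two hf) (memLp_two hg)

theorem intervalIntegral_mul_le_iSup_mul_intervalIntegral {f g : ℝ → ℝ} (hab : a ≤ b)
    (hf : ContinuousOn f (Icc a b)) (hg : IntervalIntegrable g μ a b)
    (hg_nonneg : ∀ x ∈ Icc a b, 0 ≤ g x) :
    ∫ x in a..b, f x * g x ∂μ ≤ (⨆ x : Icc a b, f x) * ∫ x in a..b, g x ∂μ := by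
  rw [← intervalIntegral.integral_const_mul]
  refine intervalIntegral.integral_mono_on hab
    (hg.continuousOn_mul (by rwa [uIcc_of_le hab])) (hg.const_mul _) fun x hx => ?_
  exact mul_le_mul_of_nonneg_right (le_ciSup_set (isCompact_Icc.bddAbove_image hf) hx)
    (hg_nonneg x hx)

end Integral

section Cutoff

variable {E : Type*} [NormedAddCommGroup E] [NormedSpace ℝ E] [CompleteSpace E]
  {a b t : ℝ} {φ φ' : ℝ → ℝ} {g g' : ℝ → E}

theorem integral_eq_sub_of_hasDerivWithinAt_Icc (hab : a ≤ b)
    (hg : ∀ τ ∈ Icc a b, HasDerivWithinAt g (g' τ) (Icc a b) τ)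
    (hg' : IntervalIntegrable g' volume a b) : ∫ τ in a..b, g' τ = g b - g a :=
  intervalIntegral.integral_eq_sub_of_hasDerivAt_of_le hab (HasDerivWithinAt.continuousOn hg)
    (fun τ hτ => (hg τ (Ioo_subset_Icc_self hτ)).hasDerivAt (Icc_mem_nhds hτ.1 hτ.2)) hg'

theorem eq_integral_cutoff_sub_integral_deriv (ht : t ∈ Icc a b)
    (hφ : ∀ τ ∈ Icc a b, HasDerivWithinAt φ (φ' τ) (Icc a b) τ)
    (hφ' : IntervalIntegrable φ' volume a b) (hφa : φ a = 0) (hφb : φ b = 1)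
    (hg : ∀ τ ∈ Icc a b, HasDerivWithinAt g (g' τ) (Icc a b) τ)
    (hg' : IntervalIntegrable g' volume a b) :
    g t = (∫ τ in a..b, (φ τ • g' τ + φ' τ • g τ)) - ∫ τ in t..b, g' τ := by
  have hab : a ≤ b := ht.1.trans ht.2
  have hsub : Icc t b ⊆ Icc a b := Icc_subset_Icc_left ht.1
  have integrable : IntervalIntegrable (fun τ => φ τ • g' τ + φ' τ • g τ) volume a b := by
    have cφ := HasDerivWithinAt.continuousOn hφ
    have cg := HasDerivWithinAt.continuousOn hg
    rw [← uIcc_of_le hab] at cφ cg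
    exact (hg'.continuousOn_smul cφ).add (hφ'.smul_continuousOn cg)
  rw [integral_eq_sub_of_hasDerivWithinAt_Icc hab (fun τ hτ => (hφ τ hτ).smul (hg τ hτ)) integrable,
    integral_eq_sub_of_hasDerivWithinAt_Icc ht.2 (fun τ hτ => (hg τ (hsub hτ)).mono hsub)
      (hg'.mono_set (by simpa only [uIcc_of_le ht.2, uIcc_of_le hab]))]
  simp [hφa, hφb]

theorem norm_le_integral_deriv_cutoff_add (ht : t ∈ Icc a b)
    (hφ : ∀ τ ∈ Icc a b, HasDerivWithinAt φ (φ' τ) (Icc a b) τ)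
    (hφ' : IntervalIntegrable φ' volume a b) (hφa : φ a = 0) (hφb : φ b = 1)
    (hφ_le : ∀ τ ∈ Icc a b, |φ τ| ≤ 1)
    (hg : ∀ τ ∈ Icc a b, HasDerivWithinAt g (g' τ) (Icc a b) τ)
    (hg' : IntervalIntegrable g' volume a b) :
    ‖g t‖ ≤ (∫ τ in a..b, |φ' τ| * ‖g τ‖) + 2 * ∫ τ in a..b, ‖g' τ‖ := by
  have hab : a ≤ b := ht.1.trans ht.2
  have cg : ContinuousOn g (uIcc a b) := by
    simpa only [uIcc_of_le hab] using HasDerivWithinAt.continuousOn hg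
  have integrable : IntervalIntegrable (fun τ => |φ' τ| * ‖g τ‖) volume a b :=
    hφ'.abs.mul_continuousOn cg.norm
  have cutoff_le : ‖∫ τ in a..b, (φ τ • g' τ + φ' τ • g τ)‖ ≤
      (∫ τ in a..b, ‖g' τ‖) + ∫ τ in a..b, |φ' τ| * ‖g τ‖ := by
    rw [← intervalIntegral.integral_add hg'.norm integrable]
    refine intervalIntegral.norm_integral_le_of_norm_le hab (ae_of_all _ fun τ hτ => ?_)
      (hg'.norm.add integrable)
    refine (norm_add_le _ _).trans ?_
    rw [norm_smul, norm_smul, Real.norm_eq_abs, Real.norm_eq_abs]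
    gcongr
    exact mul_le_of_le_one_left (norm_nonneg _) (hφ_le τ (Ioc_subset_Icc_self hτ))
  have tail_le : ‖∫ τ in t..b, g' τ‖ ≤ ∫ τ in a..b, ‖g' τ‖ :=
    (intervalIntegral.norm_integral_le_integral_norm ht.2).trans <|
      intervalIntegral.integral_mono_interval ht.1 ht.2 le_rfl
        (ae_of_all _ fun _ => norm_nonneg _) hg'.norm
  rw [eq_integral_cutoff_sub_integral_deriv ht hφ hφ' hφa hφb hg hg']
  linarith [norm_sub_le (∫ τ in a..b, (φ τ • g' τ + φ' τ • g τ)) (∫ τ in t..b, g' τ)]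

end Cutoff

section Inner

variable {𝕜 E : Type*} [RCLike 𝕜] [NormedAddCommGroup E] [InnerProductSpace 𝕜 E]
  {μ : Measure ℝ} {a b t : ℝ} {φ φ' : ℝ → ℝ} {u w u' w' : ℝ → E}

theorem intervalIntegrable_inner_of_continuousOn_left [IsLocallyFiniteMeasure μ]
    (hu : ContinuousOn u (uIcc a b)) (hw : IntervalIntegrable w μ a b) :
    IntervalIntegrable (fun τ => inner 𝕜 (u τ) (w τ)) μ a b :=
  (hw.norm.continuousOn_mul hu.norm).mono_fun'
    (hu.intervalIntegrable.aestronglyMeasurable_restrict_uIoc.inner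
      hw.aestronglyMeasurable_restrict_uIoc)
    (ae_of_all _ fun _ => norm_inner_le_norm _ _)

theorem intervalIntegrable_inner_of_continuousOn_right [IsLocallyFiniteMeasure μ]
    (hu : IntervalIntegrable u μ a b) (hw : ContinuousOn w (uIcc a b)) :
    IntervalIntegrable (fun τ => inner 𝕜 (u τ) (w τ)) μ a b :=
  (hu.norm.mul_continuousOn hw.norm).mono_fun'
    (hu.aestronglyMeasurable_restrict_uIoc.inner
      hw.intervalIntegrable.aestronglyMeasurable_restrict_uIoc)
    (ae_of_all _ fun _ => norm_inner_le_norm _ _)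

theorem intervalIntegral_norm_inner_add_inner_le [IsLocallyFiniteMeasure μ] (hab : a ≤ b)
    (hu : ContinuousOn u (Icc a b)) (hu' : IntervalIntegrable u' μ a b)
    (hw : ContinuousOn w (Icc a b)) (hw' : IntervalIntegrable w' μ a b) :
    ∫ τ in a..b, ‖inner 𝕜 (u τ) (w' τ) + inner 𝕜 (u' τ) (w τ)‖ ∂μ ≤
      (∫ τ in a..b, ‖u τ‖ * ‖w' τ‖ ∂μ) + ∫ τ in a..b, ‖u' τ‖ * ‖w τ‖ ∂μ := by
  rw [← uIcc_of_le hab] at hu hw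
  have int_uw' := hw'.norm.continuousOn_mul hu.norm
  have int_u'w := hu'.norm.mul_continuousOn hw.norm
  rw [← intervalIntegral.integral_add int_uw' int_u'w]
  refine intervalIntegral.integral_mono hab
    ((intervalIntegrable_inner_of_continuousOn_left hu hw').add
      (intervalIntegrable_inner_of_continuousOn_right hu' hw)).norm
    (int_uw'.add int_u'w) fun τ => ?_
  exact (norm_add_le _ _).trans (add_le_add (norm_inner_le_norm _ _) (norm_inner_le_norm _ _))

theorem norm_inner_le_integral_deriv_cutoff_add [NormedSpace ℝ E] (ht : t ∈ Icc a b)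
    (hu : ∀ τ ∈ Icc a b, HasDerivWithinAt u (u' τ) (Icc a b) τ)
    (hu' : IntervalIntegrable u' volume a b)
    (hw : ∀ τ ∈ Icc a b, HasDerivWithinAt w (w' τ) (Icc a b) τ)
    (hw' : IntervalIntegrable w' volume a b)
    (hφ : ∀ τ ∈ Icc a b, HasDerivWithinAt φ (φ' τ) (Icc a b) τ)
    (hφ' : IntervalIntegrable φ' volume a b) (hφa : φ a = 0) (hφb : φ b = 1)
    (hφ_le : ∀ τ ∈ Icc a b, |φ τ| ≤ 1) :
    ‖inner 𝕜 (u t) (w t)‖ ≤ (∫ τ in a..b, |φ' τ| * ‖inner 𝕜 (u τ) (w τ)‖)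
      + 2 * (∫ τ in a..b, ‖u' τ‖ * ‖w τ‖) + 2 * (∫ τ in a..b, ‖u τ‖ * ‖w' τ‖) := by
  have hab : a ≤ b := ht.1.trans ht.2
  have cu := HasDerivWithinAt.continuousOn hu
  have cw := HasDerivWithinAt.continuousOn hw
  have bound_deriv := intervalIntegral_norm_inner_add_inner_le (𝕜 := 𝕜) hab cu hu' cw hw'
  rw [← uIcc_of_le hab] at cu cw
  have bound := norm_le_integral_deriv_cutoff_add ht hφ hφ' hφa hφb hφ_le
    (fun τ hτ => (hu τ hτ).inner 𝕜 (hw τ hτ))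
    ((intervalIntegrable_inner_of_continuousOn_left cu hw').add
      (intervalIntegrable_inner_of_continuousOn_right hu' cw))
  linarith

theorem pointwise_inner_product_estimate_general [NormedSpace ℝ E] (ht : t ∈ Icc a b)
    (hu : ∀ τ ∈ Icc a b, HasDerivWithinAt u (u' τ) (Icc a b) τ)
    (hu' : IntervalIntegrable u' volume a b)
    (hw : ∀ τ ∈ Icc a b, HasDerivWithinAt w (w' τ) (Icc a b) τ)
    (hw' : IntervalIntegrable w' volume a b)
    (hφ : ∀ τ ∈ Icc a b, HasDerivWithinAt φ (φ' τ) (Icc a b) τ)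
    (hφ' : ContinuousOn φ' (Icc a b)) (hφa : φ a = 0) (hφb : φ b = 1)
    (hφ_le : ∀ τ ∈ Icc a b, |φ τ| ≤ 1) :
    ‖inner 𝕜 (u t) (w t)‖ ≤
      (⨆ τ : Icc a b, |φ' τ|) * (√(∫ τ in a..b, ‖u τ‖ ^ 2) * √(∫ τ in a..b, ‖w τ‖ ^ 2))
        + 2 * (∫ τ in a..b, ‖u' τ‖ * ‖w τ‖) + 2 * (∫ τ in a..b, ‖u τ‖ * ‖w' τ‖) := by
  have hab : a ≤ b := ht.1.trans ht.2
  have cu := HasDerivWithinAt.continuousOn hu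
  have cw := HasDerivWithinAt.continuousOn hw
  refine (norm_inner_le_integral_deriv_cutoff_add ht hu hu' hw hw' hφ
    (hφ'.intervalIntegrable_of_Icc hab) hφa hφb hφ_le).trans ?_
  gcongr
  calc ∫ τ in a..b, |φ' τ| * ‖inner 𝕜 (u τ) (w τ)‖
      ≤ (⨆ τ : Icc a b, |φ' τ|) * ∫ τ in a..b, ‖inner 𝕜 (u τ) (w τ)‖ :=
        intervalIntegral_mul_le_iSup_mul_intervalIntegral hab hφ'.abs
          ((cu.inner cw).norm.intervalIntegrable_of_Icc hab) fun _ _ => norm_nonneg _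
    _ ≤ (⨆ τ : Icc a b, |φ' τ|) * ∫ τ in a..b, ‖u τ‖ * ‖w τ‖ := by
        gcongr
        · exact Real.iSup_nonneg fun _ => abs_nonneg _
        · exact intervalIntegral.integral_mono hab
            ((cu.inner cw).norm.intervalIntegrable_of_Icc hab)
            ((cu.norm.mul cw.norm).intervalIntegrable_of_Icc hab) fun _ => norm_inner_le_norm _ _
    _ ≤ (⨆ τ : Icc a b, |φ' τ|) *
          (√(∫ τ in a..b, ‖u τ‖ ^ 2) * √(∫ τ in a..b, ‖w τ‖ ^ 2)) := by
        gcongr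
        · exact Real.iSup_nonneg fun _ => abs_nonneg _
        · exact intervalIntegral_norm_mul_norm_le_sqrt_mul_sqrt hab cu cw

end Inner

/-- Pointwise estimate of the inner product of two curves by integral norms of
the curves and their derivatives. -/
theorem pointwise_inner_product_estimate
    {H : Type*} [NormedAddCommGroup H] [InnerProductSpace ℝ H] [CompleteSpace H]
    (T : ℝ) (hT : 0 < T) (u w u' w' : ℝ → H)
    (hu : ∀ τ ∈ Set.Icc (0 : ℝ) T, HasDerivAt u (u' τ) τ)
    (hu' : ContinuousOn u' (Set.Icc 0 T))
    (hw : ∀ τ ∈ Set.Icc (0 : ℝ) T, HasDerivAt w (w' τ) τ)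
    (hw' : ContinuousOn w' (Set.Icc 0 T))
    (φ φ' : ℝ → ℝ)
    (hφ : ∀ τ ∈ Set.Icc (0 : ℝ) T, HasDerivAt φ (φ' τ) τ)
    (hφ' : ContinuousOn φ' (Set.Icc 0 T))
    (hφ0 : φ 0 = 0) (hφT : φ T = 1)
    (hφbdd : ∀ τ ∈ Set.Icc (0 : ℝ) T, |φ τ| ≤ 1) :
    ∀ t ∈ Set.Icc (0 : ℝ) T,
      ⟪u t, w t⟫ ≤
        (⨆ τ : Set.Icc (0 : ℝ) T, |φ' τ.1|) *
            (Real.sqrt (∫ τ in (0 : ℝ)..T, ‖u τ‖ ^ 2) *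
              Real.sqrt (∫ τ in (0 : ℝ)..T, ‖w τ‖ ^ 2))
        + 2 * (∫ τ in (0 : ℝ)..T, ‖u' τ‖ * ‖w τ‖)
        + 2 * (∫ τ in (0 : ℝ)..T, ‖u τ‖ * ‖w' τ‖) :=
  fun _ ht => (le_abs_self _).trans <| pointwise_inner_product_estimate_general (𝕜 := ℝ) ht
    (fun τ hτ => (hu τ hτ).hasDerivWithinAt) (hu'.intervalIntegrable_of_Icc hT.le)
    (fun τ hτ => (hw τ hτ).hasDerivWithinAt) (hw'.intervalIntegrable_of_Icc hT.le)
    (fun τ hτ => (hφ τ hτ).hasDerivWithinAt) hφ' hφ0 hφT hφbdd
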